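/- Type-and-coeffect preservation of the CBV translation of the graded λ-calculus: if γ·Γ ⊢ e : τ in the graded source λ-calculus, then γ·⟦Γ⟧v ⊢ ⟦e⟧v : F_1 ⟦τ⟧v in CBPV with coeffects (with the same grade vector γ). -/

import Mathlib

set_option autoImplicit false

/-- A preordered semiring of grades `(Q, +, 0, ·, 1, ≤co)`,
where `≤co` is a preorder respected by `+` and `·`. -/
structure CoSig (Q : Type) where
  add : Q → Q → Q
  zero : Q
  mul : Q → Q → Q
  one : Q
  le : Q → Q → Prop
  add_assoc : ∀ a b c, add (add a b) c = add a (add b c)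
  add_comm : ∀ a b, add a b = add b a
  add_zero : ∀ a, add a zero = a
  mul_assoc : ∀ a b c, mul (mul a b) c = mul a (mul b c)
  one_mul : ∀ a, mul one a = a
  mul_one : ∀ a, mul a one = a
  zero_mul : ∀ a, mul zero a = zero
  mul_zero : ∀ a, mul a zero = zero
  left_distrib : ∀ a b c, mul a (add b c) = add (mul a b) (mul a c)
  right_distrib : ∀ a b c, mul (add a b) c = add (mul a c) (mul b c)
  le_refl : ∀ a, le a a
  le_trans : ∀ a b c, le a b → le b c → le a c
  add_le_add : ∀ a b c d, le a b → le c d → le (add a c) (add b d)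
  mul_le_mul : ∀ a b c d, le a b → le c d → le (mul a c) (mul b d)

namespace CBPVCo

/-- Pointwise comparison of grade vectors: `γ₁ ≤co γ₂`. -/
def vle {Q : Type} (S : CoSig Q) (γ₁ γ₂ : List Q) : Prop := List.Forall₂ S.le γ₁ γ₂

/-- Pointwise addition of grade vectors. -/
def vadd {Q : Type} (S : CoSig Q) (γ₁ γ₂ : List Q) : List Q := List.zipWith S.add γ₁ γ₂

/-- Pointwise scaling of a grade vector: `q·γ`. -/
def vscale {Q : Type} (S : CoSig Q) (q : Q) (γ : List Q) : List Q := γ.map (S.mul q)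

/-- `γ ≤co 0̄`: every entry of the grade vector is discardable. -/
def leZero {Q : Type} (S : CoSig Q) (γ : List Q) : Prop := ∀ q ∈ γ, S.le q S.zero

mutual
/-- CBPV value types (coeffect version): `unit`, thunks `U B`, positive products, sums. -/
inductive VTy (Q : Type) : Type where
  | unit : VTy Q
  | thunk : CTy Q → VTy Q
  | prod : VTy Q → VTy Q → VTy Q
  | sum : VTy Q → VTy Q → VTy Q
/-- CBPV computation types (coeffect version): graded functions `A^q → B`,
graded returners `F_q A`, negative products. -/
inductive CTy (Q : Type) : Type where
  | arr : VTy Q → Q → CTy Q → CTy Q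
  | F : Q → VTy Q → CTy Q
  | wth : CTy Q → CTy Q → CTy Q
end

mutual
/-- CBPV values (de Bruijn indices for variables). -/
inductive Val (Q : Type) : Type where
  | var : Nat → Val Q
  | unit : Val Q
  | thunk : Comp Q → Val Q
  | pair : Val Q → Val Q → Val Q
  | inl : Val Q → Val Q
  | inr : Val Q → Val Q
/-- CBPV computations, with grade annotations on binders and on `return`. -/
inductive Comp (Q : Type) : Type where
  | lam : Q → Comp Q → Comp Q
  | app : Comp Q → Val Q → Comp Q
  | force : Val Q → Comp Q
  | split : Q → Val Q → Comp Q → Comp Q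
  | cpair : Comp Q → Comp Q → Comp Q
  | fst : Comp Q → Comp Q
  | snd : Comp Q → Comp Q
  | ret : Q → Val Q → Comp Q
  | letin : Q → Comp Q → Comp Q → Comp Q
  | seq : Val Q → Comp Q → Comp Q
  | case : Q → Val Q → Comp Q → Comp Q → Comp Q
end

mutual
/-- The value typing judgment `γ·Γ ⊢ V : A` of the CBPV type-and-coeffect system. -/
inductive VHasTy {Q : Type} (S : CoSig Q) : List Q → List (VTy Q) → Val Q → VTy Q → Prop where
  | var : ∀ {γ : List Q} {Γ : List (VTy Q)} {x : Nat} {q : Q} {A : VTy Q},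
      γ.length = Γ.length → Γ[x]? = some A → γ[x]? = some q → S.le q S.one →
      (∀ (i : Nat) (q' : Q), i ≠ x → γ[i]? = some q' → S.le q' S.zero) →
      VHasTy S γ Γ (.var x) A
  | unit : ∀ {γ : List Q} {Γ : List (VTy Q)},
      γ.length = Γ.length → leZero S γ → VHasTy S γ Γ .unit .unit
  | thunk : ∀ {γ : List Q} {Γ : List (VTy Q)} {M : Comp Q} {B : CTy Q},
      CHasTy S γ Γ M B → VHasTy S γ Γ (.thunk M) (.thunk B)
  | pair : ∀ {γ γ₁ γ₂ : List Q} {Γ : List (VTy Q)} {V₁ V₂ : Val Q} {A₁ A₂ : VTy Q},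
      VHasTy S γ₁ Γ V₁ A₁ → VHasTy S γ₂ Γ V₂ A₂ → vle S γ (vadd S γ₁ γ₂) →
      VHasTy S γ Γ (.pair V₁ V₂) (.prod A₁ A₂)
  | inl : ∀ {γ : List Q} {Γ : List (VTy Q)} {V : Val Q} {A₁ A₂ : VTy Q},
      VHasTy S γ Γ V A₁ → VHasTy S γ Γ (.inl V) (.sum A₁ A₂)
  | inr : ∀ {γ : List Q} {Γ : List (VTy Q)} {V : Val Q} {A₁ A₂ : VTy Q},
      VHasTy S γ Γ V A₂ → VHasTy S γ Γ (.inr V) (.sum A₁ A₂)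

/-- The computation typing judgment `γ·Γ ⊢ M : B` of the CBPV type-and-coeffect system. -/
inductive CHasTy {Q : Type} (S : CoSig Q) : List Q → List (VTy Q) → Comp Q → CTy Q → Prop where
  | lam : ∀ {γ : List Q} {Γ : List (VTy Q)} {q : Q} {A : VTy Q} {M : Comp Q} {B : CTy Q},
      CHasTy S (q :: γ) (A :: Γ) M B → CHasTy S γ Γ (.lam q M) (.arr A q B)
  | app : ∀ {γ γ₁ γ₂ : List Q} {Γ : List (VTy Q)} {M : Comp Q} {V : Val Q}
      {A : VTy Q} {q : Q} {B : CTy Q},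
      CHasTy S γ₁ Γ M (.arr A q B) → VHasTy S γ₂ Γ V A →
      vle S γ (vadd S γ₁ (vscale S q γ₂)) → CHasTy S γ Γ (.app M V) B
  | force : ∀ {γ : List Q} {Γ : List (VTy Q)} {V : Val Q} {B : CTy Q},
      VHasTy S γ Γ V (.thunk B) → CHasTy S γ Γ (.force V) B
  | ret : ∀ {γ γ₁ : List Q} {Γ : List (VTy Q)} {q : Q} {V : Val Q} {A : VTy Q},
      VHasTy S γ₁ Γ V A → vle S γ (vscale S q γ₁) → CHasTy S γ Γ (.ret q V) (.F q A)
  | letin : ∀ {γ γ₁ γ₂ : List Q} {Γ : List (VTy Q)} {q₁ q₂ : Q} {M N : Comp Q}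
      {A : VTy Q} {B : CTy Q},
      CHasTy S γ₁ Γ M (.F q₁ A) → CHasTy S (S.mul q₁ q₂ :: γ₂) (A :: Γ) N B →
      vle S γ (vadd S (vscale S q₂ γ₁) γ₂) → CHasTy S γ Γ (.letin q₂ M N) B
  | split : ∀ {γ γ₁ γ₂ : List Q} {Γ : List (VTy Q)} {q : Q} {V : Val Q}
      {A₁ A₂ : VTy Q} {N : Comp Q} {B : CTy Q},
      VHasTy S γ₁ Γ V (.prod A₁ A₂) → CHasTy S (q :: q :: γ₂) (A₂ :: A₁ :: Γ) N B →
      vle S γ (vadd S (vscale S q γ₁) γ₂) → CHasTy S γ Γ (.split q V N) B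
  | cpair : ∀ {γ : List Q} {Γ : List (VTy Q)} {M₁ M₂ : Comp Q} {B₁ B₂ : CTy Q},
      CHasTy S γ Γ M₁ B₁ → CHasTy S γ Γ M₂ B₂ → CHasTy S γ Γ (.cpair M₁ M₂) (.wth B₁ B₂)
  | fst : ∀ {γ : List Q} {Γ : List (VTy Q)} {M : Comp Q} {B₁ B₂ : CTy Q},
      CHasTy S γ Γ M (.wth B₁ B₂) → CHasTy S γ Γ (.fst M) B₁
  | snd : ∀ {γ : List Q} {Γ : List (VTy Q)} {M : Comp Q} {B₁ B₂ : CTy Q},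
      CHasTy S γ Γ M (.wth B₁ B₂) → CHasTy S γ Γ (.snd M) B₂
  | seq : ∀ {γ γ₁ γ₂ : List Q} {Γ : List (VTy Q)} {V : Val Q} {M : Comp Q} {B : CTy Q},
      VHasTy S γ₁ Γ V .unit → CHasTy S γ₂ Γ M B → vle S γ (vadd S γ₁ γ₂) →
      CHasTy S γ Γ (.seq V M) B
  | case : ∀ {γ γ₁ γ₂ : List Q} {Γ : List (VTy Q)} {q : Q} {V : Val Q}
      {A₁ A₂ : VTy Q} {M₁ M₂ : Comp Q} {B : CTy Q},
      VHasTy S γ₁ Γ V (.sum A₁ A₂) → CHasTy S (q :: γ₂) (A₁ :: Γ) M₁ B →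
      CHasTy S (q :: γ₂) (A₂ :: Γ) M₂ B → S.le q S.one →
      vle S γ (vadd S (vscale S q γ₁) γ₂) → CHasTy S γ Γ (.case q V M₁ M₂) B
end

/-- Lifting a de Bruijn renaming under one binder. -/
def liftRen (f : Nat → Nat) : Nat → Nat
  | 0 => 0
  | n + 1 => f n + 1

mutual
/-- Renaming of values. -/
def Val.rename {Q : Type} : Val Q → (Nat → Nat) → Val Q
  | .var x, f => .var (f x)
  | .unit, _ => .unit
  | .thunk M, f => .thunk (M.rename f)
  | .pair V₁ V₂, f => .pair (V₁.rename f) (V₂.rename f)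
  | .inl V, f => .inl (V.rename f)
  | .inr V, f => .inr (V.rename f)
/-- Renaming of computations. -/
def Comp.rename {Q : Type} : Comp Q → (Nat → Nat) → Comp Q
  | .lam q M, f => .lam q (M.rename (liftRen f))
  | .app M V, f => .app (M.rename f) (V.rename f)
  | .force V, f => .force (V.rename f)
  | .split q V N, f => .split q (V.rename f) (N.rename (liftRen (liftRen f)))
  | .cpair M₁ M₂, f => .cpair (M₁.rename f) (M₂.rename f)
  | .fst M, f => .fst (M.rename f)
  | .snd M, f => .snd (M.rename f)
  | .ret q V, f => .ret q (V.rename f)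
  | .letin q M N, f => .letin q (M.rename f) (N.rename (liftRen f))
  | .seq V M, f => .seq (V.rename f) (M.rename f)
  | .case q V M₁ M₂, f => .case q (V.rename f) (M₁.rename (liftRen f)) (M₂.rename (liftRen f))
end

/-- Weakening: shift all free variables up by one. -/
def shift {Q : Type} (M : Comp Q) : Comp Q := M.rename Nat.succ

/-- Weakening under one binder. -/
def shift1 {Q : Type} (M : Comp Q) : Comp Q := M.rename (liftRen Nat.succ)

/-- Weakening under two binders. -/
def shift2 {Q : Type} (M : Comp Q) : Comp Q := M.rename (liftRen (liftRen Nat.succ))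

end CBPVCo

namespace LamCo

/-- Types of the graded source λ-calculus (CBV version, with `⊗`-products):
graded functions, tensor products, sums and the graded modal type `□_q τ`. -/
inductive STy (Q : Type) : Type where
  | unit : STy Q
  | arr : STy Q → Q → STy Q → STy Q
  | tensor : STy Q → STy Q → STy Q
  | sum : STy Q → STy Q → STy Q
  | box : Q → STy Q → STy Q

/-- Terms of the graded source λ-calculus (de Bruijn indices); application
carries the grade of the function type it eliminates. -/
inductive STm (Q : Type) : Type where
  | var : Nat → STm Q
  | lam : Q → STm Q → STm Q
  | app : Q → STm Q → STm Q → STm Q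
  | unit : STm Q
  | seq : STm Q → STm Q → STm Q
  | pair : STm Q → STm Q → STm Q
  | split : Q → STm Q → STm Q → STm Q
  | inl : STm Q → STm Q
  | inr : STm Q → STm Q
  | case : Q → STm Q → STm Q → STm Q → STm Q
  | box : Q → STm Q → STm Q
  | unbox : Q → STm Q → STm Q → STm Q

open CBPVCo in
/-- The type-and-coeffect judgment `γ·Γ ⊢ e : τ` of the graded source λ-calculus. -/
inductive HasTy {Q : Type} (S : CoSig Q) : List Q → List (STy Q) → STm Q → STy Q → Prop where
  | var : ∀ {γ : List Q} {Γ : List (STy Q)} {x : Nat} {q : Q} {τ : STy Q},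
      γ.length = Γ.length → Γ[x]? = some τ → γ[x]? = some q → S.le q S.one →
      (∀ (i : Nat) (q' : Q), i ≠ x → γ[i]? = some q' → S.le q' S.zero) →
      HasTy S γ Γ (.var x) τ
  | lam : ∀ {γ : List Q} {Γ : List (STy Q)} {q : Q} {e : STm Q} {τ₁ τ₂ : STy Q},
      HasTy S (q :: γ) (τ₁ :: Γ) e τ₂ → HasTy S γ Γ (.lam q e) (.arr τ₁ q τ₂)
  | app : ∀ {γ γ₁ γ₂ : List Q} {Γ : List (STy Q)} {e₁ e₂ : STm Q} {τ₁ τ₂ : STy Q} {q : Q},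
      HasTy S γ₁ Γ e₁ (.arr τ₁ q τ₂) → HasTy S γ₂ Γ e₂ τ₁ →
      vle S γ (vadd S γ₁ (vscale S q γ₂)) → HasTy S γ Γ (.app q e₁ e₂) τ₂
  | unit : ∀ {γ : List Q} {Γ : List (STy Q)},
      γ.length = Γ.length → leZero S γ → HasTy S γ Γ .unit .unit
  | seq : ∀ {γ γ₁ γ₂ : List Q} {Γ : List (STy Q)} {e₁ e₂ : STm Q} {τ : STy Q},
      HasTy S γ₁ Γ e₁ .unit → HasTy S γ₂ Γ e₂ τ → vle S γ (vadd S γ₁ γ₂) →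
      HasTy S γ Γ (.seq e₁ e₂) τ
  | pair : ∀ {γ γ₁ γ₂ : List Q} {Γ : List (STy Q)} {e₁ e₂ : STm Q} {τ₁ τ₂ : STy Q},
      HasTy S γ₁ Γ e₁ τ₁ → HasTy S γ₂ Γ e₂ τ₂ → vle S γ (vadd S γ₁ γ₂) →
      HasTy S γ Γ (.pair e₁ e₂) (.tensor τ₁ τ₂)
  | split : ∀ {γ γ₁ γ₂ : List Q} {Γ : List (STy Q)} {q : Q} {e₁ e₂ : STm Q}
      {τ₁ τ₂ τ : STy Q},
      HasTy S γ₁ Γ e₁ (.tensor τ₁ τ₂) → HasTy S (q :: q :: γ₂) (τ₂ :: τ₁ :: Γ) e₂ τ →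
      vle S γ (vadd S (vscale S q γ₁) γ₂) → HasTy S γ Γ (.split q e₁ e₂) τ
  | inl : ∀ {γ : List Q} {Γ : List (STy Q)} {e : STm Q} {τ₁ τ₂ : STy Q},
      HasTy S γ Γ e τ₁ → HasTy S γ Γ (.inl e) (.sum τ₁ τ₂)
  | inr : ∀ {γ : List Q} {Γ : List (STy Q)} {e : STm Q} {τ₁ τ₂ : STy Q},
      HasTy S γ Γ e τ₂ → HasTy S γ Γ (.inr e) (.sum τ₁ τ₂)
  | case : ∀ {γ γ₁ γ₂ : List Q} {Γ : List (STy Q)} {q : Q} {e e₁ e₂ : STm Q}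
      {τ₁ τ₂ τ : STy Q},
      HasTy S γ₁ Γ e (.sum τ₁ τ₂) → HasTy S (q :: γ₂) (τ₁ :: Γ) e₁ τ →
      HasTy S (q :: γ₂) (τ₂ :: Γ) e₂ τ → S.le q S.one →
      vle S γ (vadd S (vscale S q γ₁) γ₂) → HasTy S γ Γ (.case q e e₁ e₂) τ
  | box : ∀ {γ γ₁ : List Q} {Γ : List (STy Q)} {q : Q} {e : STm Q} {τ : STy Q},
      HasTy S γ₁ Γ e τ → vle S γ (vscale S q γ₁) → HasTy S γ Γ (.box q e) (.box q τ)
  | unbox : ∀ {γ γ₁ γ₂ : List Q} {Γ : List (STy Q)} {q₁ q₂ : Q} {e₁ e₂ : STm Q}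
      {τ τ' : STy Q},
      HasTy S γ₁ Γ e₁ (.box q₁ τ) → HasTy S (S.mul q₁ q₂ :: γ₂) (τ :: Γ) e₂ τ' →
      vle S γ (vadd S (vscale S q₂ γ₁) γ₂) → HasTy S γ Γ (.unbox q₂ e₁ e₂) τ'

end LamCo

open CBPVCo LamCo

/-- CBV translation of graded source types into CBPV value types;
the graded modal type is translated as `⟦□_q τ⟧v = U (F_q ⟦τ⟧v)`. -/
def tyTransV {Q : Type} (S : CoSig Q) : STy Q → VTy Q
  | .unit => .unit
  | .arr τ₁ q τ₂ => .thunk (.arr (tyTransV S τ₁) q (.F S.one (tyTransV S τ₂)))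
  | .tensor τ₁ τ₂ => .prod (tyTransV S τ₁) (tyTransV S τ₂)
  | .sum τ₁ τ₂ => .sum (tyTransV S τ₁) (tyTransV S τ₂)
  | .box q τ => .thunk (.F q (tyTransV S τ))

/-- The graded analogue of Levy's CBV translation of source terms into CBPV
computations, extended with the graded modal operations `box` and `unbox`. -/
def tmTransV {Q : Type} (S : CoSig Q) : STm Q → Comp Q
  | .var x => .ret S.one (.var x)
  | .lam q e => .ret S.one (.thunk (.lam q (tmTransV S e)))
  | .app q e₁ e₂ =>
      .letin S.one (tmTransV S e₁)
        (.letin q (shift (tmTransV S e₂)) (.app (.force (.var 1)) (.var 0)))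
  | .unit => .ret S.one .unit
  | .seq e₁ e₂ => .letin S.one (tmTransV S e₁) (.seq (.var 0) (shift (tmTransV S e₂)))
  | .pair e₁ e₂ =>
      .letin S.one (tmTransV S e₁)
        (.letin S.one (shift (tmTransV S e₂)) (.ret S.one (.pair (.var 1) (.var 0))))
  | .split q e₁ e₂ =>
      .letin q (tmTransV S e₁) (.split q (.var 0) (shift2 (tmTransV S e₂)))
  | .inl e => .letin S.one (tmTransV S e) (.ret S.one (.inl (.var 0)))
  | .inr e => .letin S.one (tmTransV S e) (.ret S.one (.inr (.var 0)))
  | .case q e e₁ e₂ =>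
      .letin q (tmTransV S e)
        (.case q (.var 0) (shift1 (tmTransV S e₁)) (shift1 (tmTransV S e₂)))
  | .box q e => .ret S.one (.thunk (.letin q (tmTransV S e) (.ret q (.var 0))))
  | .unbox q₂ e₁ e₂ =>
      .letin q₂ (tmTransV S e₁) (.letin q₂ (.force (.var 0)) (shift1 (tmTransV S e₂)))

namespace CBVPres

/-- Inserting a variable at position `n`, as a renaming. -/
def lr : Nat → Nat → Nat
  | 0 => Nat.succ
  | n + 1 => liftRen (lr n)

theorem get_ins {α : Type} (a : α) (n : Nat) (l : List α) (x : Nat) (b : α)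
    (h : l[x]? = some b) : (l.insertIdx n a)[lr n x]? = some b := by
  induction n generalizing l x with
  | zero => simpa [lr] using h
  | succ n ih =>
    cases l with
    | nil => simp at h
    | cons c l =>
      cases x with
      | zero => simpa [lr, liftRen] using h
      | succ x =>
        have := ih l x (by simpa using h)
        simp only [lr, liftRen, List.insertIdx_succ_cons, List.getElem?_cons_succ]
        exact this

theorem get_ins_inv {α : Type} (a : α) (n : Nat) (l : List α) (i : Nat) (b : α)
    (h : (l.insertIdx n a)[i]? = some b) : b = a ∨ ∃ x, lr n x = i ∧ l[x]? = some b := by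
  induction n generalizing l i with
  | zero =>
    cases i with
    | zero => left; simpa [eq_comm] using h
    | succ i => right; exact ⟨i, rfl, by simpa using h⟩
  | succ n ih =>
    cases l with
    | nil => simp at h
    | cons c l =>
      cases i with
      | zero => right; exact ⟨0, rfl, by simpa using h⟩
      | succ i =>
        rcases ih l i (by simpa using h) with hb | ⟨x, rfl, hb⟩
        · exact Or.inl hb
        · right; exact ⟨x + 1, rfl, by simpa using hb⟩

theorem len_ins {α β : Type} (a : α) (b : β) (n : Nat) (l : List α) (m : List β)
    (h : l.length = m.length) : (l.insertIdx n a).length = (m.insertIdx n b).length := by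
  simp [List.length_insertIdx, h]

variable {Q : Type} (S : CoSig Q)

theorem co_zero_add (a : Q) : S.add S.zero a = a := by rw [S.add_comm, S.add_zero]

theorem vadd_ins (n : Nat) (l m : List Q) :
    vadd S (l.insertIdx n S.zero) (m.insertIdx n S.zero) = (vadd S l m).insertIdx n S.zero := by
  induction n generalizing l m with
  | zero => simp [vadd, S.add_zero]
  | succ n ih =>
    cases l with
    | nil => simp [vadd]
    | cons c l =>
      cases m with
      | nil => simp [vadd]
      | cons d m => simpa [vadd] using ih l m

theorem vscale_ins (q : Q) (n : Nat) (l : List Q) :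
    vscale S q (l.insertIdx n S.zero) = (vscale S q l).insertIdx n S.zero := by
  induction n generalizing l with
  | zero => simp [vscale, S.mul_zero]
  | succ n ih =>
    cases l with
    | nil => simp [vscale]
    | cons c l => simpa [vscale] using ih l

theorem vle_ins (n : Nat) (l m : List Q) (h : vle S l m) :
    vle S (l.insertIdx n S.zero) (m.insertIdx n S.zero) := by
  induction n generalizing l m with
  | zero => exact List.Forall₂.cons (S.le_refl _) h
  | succ n ih =>
    cases h with
    | nil => exact List.Forall₂.nil
    | cons h₁ h₂ => exact List.Forall₂.cons h₁ (ih _ _ h₂)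

theorem vle_add_ins (n : Nat) (q : Q) (l m k : List Q) (h : vle S k (vadd S (vscale S q l) m)) :
    vle S (k.insertIdx n S.zero)
      (vadd S (vscale S q (l.insertIdx n S.zero)) (m.insertIdx n S.zero)) := by
  rw [vscale_ins, vadd_ins]; exact vle_ins S n _ _ h

mutual
theorem vren (n : Nat) (A₀ : VTy Q) {γ : List Q} {Γ : List (VTy Q)} {V : Val Q} {A : VTy Q} :
    VHasTy S γ Γ V A →
    VHasTy S (γ.insertIdx n S.zero) (Γ.insertIdx n A₀) (V.rename (lr n)) A
  | .var hl hx hq h1 h0 => by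
    refine .var (len_ins _ _ _ _ _ hl) (get_ins _ _ _ _ _ hx) (get_ins _ _ _ _ _ hq) h1 ?_
    intro i q' hi hq'
    rcases get_ins_inv _ _ _ _ _ hq' with rfl | ⟨y, rfl, hy⟩
    · exact S.le_refl _
    · exact h0 y q' (fun e => hi (by rw [e])) hy
  | .unit hl h0 => by
    refine .unit (len_ins _ _ _ _ _ hl) ?_
    intro q hq
    rcases List.eq_or_mem_of_mem_insertIdx hq with rfl | hq
    · exact S.le_refl _
    · exact h0 q hq
  | .thunk h => .thunk (cren n A₀ h)
  | .pair h₁ h₂ h => .pair (vren n A₀ h₁) (vren n A₀ h₂) (by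
      rw [vadd_ins]; exact vle_ins S n _ _ h)
  | .inl h => .inl (vren n A₀ h)
  | .inr h => .inr (vren n A₀ h)
theorem cren (n : Nat) (A₀ : VTy Q) {γ : List Q} {Γ : List (VTy Q)} {M : Comp Q} {B : CTy Q} :
    CHasTy S γ Γ M B →
    CHasTy S (γ.insertIdx n S.zero) (Γ.insertIdx n A₀) (M.rename (lr n)) B
  | .lam h => .lam (cren (n + 1) A₀ h)
  | .app h₁ h₂ h => .app (cren n A₀ h₁) (vren n A₀ h₂) (by
      rw [vscale_ins, vadd_ins]; exact vle_ins S n _ _ h)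
  | .force h => .force (vren n A₀ h)
  | .ret h₁ h => .ret (vren n A₀ h₁) (by rw [vscale_ins]; exact vle_ins S n _ _ h)
  | .letin h₁ h₂ h => .letin (cren n A₀ h₁) (cren (n + 1) A₀ h₂) (vle_add_ins S n _ _ _ _ h)
  | .split h₁ h₂ h => .split (vren n A₀ h₁) (cren (n + 2) A₀ h₂) (vle_add_ins S n _ _ _ _ h)
  | .cpair h₁ h₂ => .cpair (cren n A₀ h₁) (cren n A₀ h₂)
  | .fst h => .fst (cren n A₀ h)
  | .snd h => .snd (cren n A₀ h)
  | .seq h₁ h₂ h => .seq (vren n A₀ h₁) (cren n A₀ h₂) (by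
      rw [vadd_ins]; exact vle_ins S n _ _ h)
  | .case h₁ h₂ h₃ hq h => .case (vren n A₀ h₁) (cren (n + 1) A₀ h₂) (cren (n + 1) A₀ h₃) hq (vle_add_ins S n _ _ _ _ h)
end

theorem vle_refl (γ : List Q) : vle S γ γ := by
  induction γ with
  | nil => exact .nil
  | cons a l ih => exact .cons (S.le_refl a) ih

theorem vle_len {γ δ : List Q} (h : vle S γ δ) : γ.length = δ.length := List.Forall₂.length_eq h

/-- The zero grade vector of a given length. -/
def zv (n : Nat) : List Q := List.replicate n S.zero

theorem zv_succ (n : Nat) : zv S (n + 1) = S.zero :: zv S n := rfl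

theorem vscale_one (γ : List Q) : vscale S S.one γ = γ := by
  have : S.mul S.one = id := funext S.one_mul
  simp [vscale, this]

theorem vscale_zv (q : Q) (n : Nat) : vscale S q (zv S n) = zv S n := by
  simp [vscale, zv, S.mul_zero]

theorem vadd_zv (γ : List Q) (n : Nat) (h : γ.length = n) : vadd S γ (zv S n) = γ := by
  subst h
  induction γ with
  | nil => rfl
  | cons a l ih => simpa [vadd, zv, List.replicate_succ, S.add_zero] using ih

theorem zv_vadd (γ : List Q) (n : Nat) (h : γ.length = n) : vadd S (zv S n) γ = γ := by
  subst h
  induction γ with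
  | nil => rfl
  | cons a l ih => simpa [vadd, zv, List.replicate_succ, co_zero_add] using ih

theorem vadd_cons (a b : Q) (l m : List Q) : vadd S (a :: l) (b :: m) = S.add a b :: vadd S l m :=
  rfl

theorem vscale_cons (q a : Q) (l : List Q) : vscale S q (a :: l) = S.mul q a :: vscale S q l := rfl

theorem zv_get (n i : Nat) (q : Q) (h : (zv S n)[i]? = some q) : S.le q S.zero := by
  simp only [zv, List.getElem?_replicate] at h
  split at h
  · cases h; exact S.le_refl _
  · cases h

theorem var0 (Γ : List (VTy Q)) (A : VTy Q) :
    VHasTy S (S.one :: zv S Γ.length) (A :: Γ) (.var 0) A := by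
  refine .var (q := S.one) (by simp [zv]) rfl rfl (S.le_refl _) ?_
  intro i q hi h
  cases i with
  | zero => exact absurd rfl hi
  | succ i => exact zv_get S _ i q (by simpa using h)

theorem var1 (Γ : List (VTy Q)) (A B : VTy Q) :
    VHasTy S (S.zero :: S.one :: zv S Γ.length) (B :: A :: Γ) (.var 1) A :=
  vren S 0 B (var0 S Γ A)

theorem slen {γ : List Q} {Γ : List (STy Q)} {e : STm Q} {τ : STy Q}
    (h : LamCo.HasTy S γ Γ e τ) : γ.length = Γ.length := by
  induction h with
  | var hl => exact hl
  | unit hl => exact hl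
  | lam _ ih => simpa using ih
  | inl _ ih => exact ih
  | inr _ ih => exact ih
  | app _ _ h ih₁ ih₂ => simpa [vadd, vscale, ih₁, ih₂] using vle_len S h
  | seq _ _ h ih₁ ih₂ => simpa [vadd, vscale, ih₁, ih₂] using vle_len S h
  | pair _ _ h ih₁ ih₂ => simpa [vadd, vscale, ih₁, ih₂] using vle_len S h
  | split _ _ h ih₁ ih₂ =>
    simp only [List.length_cons, Nat.add_right_cancel_iff] at ih₂
    simpa [vadd, vscale, ih₁, ih₂] using vle_len S h
  | case _ _ _ _ h ih₁ ih₂ =>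
    simp only [List.length_cons, Nat.add_right_cancel_iff] at ih₂
    simpa [vadd, vscale, ih₁, ih₂] using vle_len S h
  | box _ h ih => simpa [vscale, ih] using vle_len S h
  | unbox _ _ h ih₁ ih₂ =>
    simp only [List.length_cons, Nat.add_right_cancel_iff] at ih₂
    simpa [vadd, vscale, ih₁, ih₂] using vle_len S h

theorem vle_of_eq {γ δ : List Q} (h : δ = γ) : vle S γ δ := h ▸ vle_refl S δ

end CBVPres

open CBVPres in
/-- Type-and-coeffect preservation of the CBV translation of the graded
λ-calculus: if `γ·Γ ⊢ e : τ` in the graded source λ-calculus, then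
`γ·⟦Γ⟧v ⊢ ⟦e⟧v : F_1 ⟦τ⟧v` in CBPV with coeffects, with the same grade vector `γ`. -/
theorem cbv_graded_translation_preservation {Q : Type} (S : CoSig Q)
    {γ : List Q} {Γ : List (STy Q)} {e : STm Q} {τ : STy Q}
    (h : LamCo.HasTy S γ Γ e τ) :
    CHasTy S γ (Γ.map (tyTransV S)) (tmTransV S e) (.F S.one (tyTransV S τ)) := by
  induction h with
  | var hl hx hq h1 h0 =>
    exact .ret (.var (by simpa using hl) (by simp [hx]) hq h1 h0) (vle_of_eq S (vscale_one S _))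
  | lam _ ih => exact .ret (.thunk (.lam ih)) (vle_of_eq S (vscale_one S _))
  | @app γ γ₁ γ₂ Γ e₁ e₂ τ₁ τ₂ q d₁ d₂ h ih₁ ih₂ =>
    have l₂ := slen S d₂
    refine .letin (γ₂ := vscale S q γ₂) ih₁ ?_ (by rw [vscale_one]; exact h)
    refine .letin (γ₂ := S.one :: zv S (Γ.map (tyTransV S)).length) (cren S 0 _ ih₂) ?_ ?_
    · refine .app (.force (var1 S _ _ _)) (var0 S (_ :: _) _) (vle_of_eq S ?_)
      simp only [List.length_cons, zv_succ]
      simp only [vscale_cons, vadd_cons, vscale_zv, co_zero_add, S.mul_one, S.one_mul, S.mul_zero,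
        S.add_zero]
      rw [vadd_zv _ _ _ (by simp [zv])]
    · apply vle_of_eq
      simp only [List.insertIdx_zero, vscale_cons, vadd_cons, S.mul_one, S.mul_zero, co_zero_add]
      rw [vadd_zv _ _ _ (by simp [vscale, l₂])]
  | unit hl h0 => exact .ret (.unit (by simpa using hl) h0) (vle_of_eq S (vscale_one S _))
  | @seq γ γ₁ γ₂ Γ e₁ e₂ τ d₁ d₂ h ih₁ ih₂ =>
    have l₂ := slen S d₂
    refine .letin (γ₂ := γ₂) ih₁ ?_ (by rw [vscale_one]; exact h)
    refine .seq (var0 S _ _) (cren S 0 _ ih₂) (vle_of_eq S ?_)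
    simp only [List.insertIdx_zero, vadd_cons, S.mul_one, S.add_zero]
    rw [zv_vadd _ _ _ (by simp [l₂])]
  | @pair γ γ₁ γ₂ Γ e₁ e₂ τ₁ τ₂ d₁ d₂ h ih₁ ih₂ =>
    have l₂ := slen S d₂
    refine .letin (γ₂ := γ₂) ih₁ ?_ (by rw [vscale_one]; exact h)
    refine .letin (γ₂ := S.one :: zv S (Γ.map (tyTransV S)).length) (cren S 0 _ ih₂) ?_ ?_
    · refine .ret (.pair (var1 S _ _ _) (var0 S (_ :: _) _) (vle_refl S _)) (vle_of_eq S ?_)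
      rw [vscale_one]
      simp only [List.length_cons, zv_succ]
      simp only [vadd_cons, co_zero_add, S.mul_one, S.add_zero]
      rw [vadd_zv _ _ _ (by simp [zv])]
    · apply vle_of_eq
      simp only [List.insertIdx_zero, vscale_one, vadd_cons, S.mul_one, co_zero_add]
      rw [vadd_zv _ _ _ (by simp [l₂])]
  | @split γ γ₁ γ₂ Γ q e₁ e₂ τ₁ τ₂ τ d₁ d₂ h ih₁ ih₂ =>
    have l₂ := slen S d₂
    refine .letin (γ₂ := γ₂) ih₁ ?_ h
    refine .split (γ₂ := S.zero :: γ₂) (var0 S _ _) (cren S 2 _ ih₂) (vle_of_eq S ?_)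
    simp only [vscale_cons, vscale_zv, vadd_cons, S.mul_one, S.one_mul, S.add_zero]
    rw [zv_vadd _ _ _ (by simpa using l₂)]
  | @inl γ Γ e τ₁ τ₂ d ih =>
    have l := slen S d
    refine .letin (γ₂ := zv S (Γ.map (tyTransV S)).length) ih
      (.ret (.inl (var0 S _ _)) (vle_of_eq S ?_)) (vle_of_eq S ?_)
    · rw [vscale_one, S.mul_one]
    · rw [vscale_one, vadd_zv _ _ _ (by simp [l])]
  | @inr γ Γ e τ₁ τ₂ d ih =>
    have l := slen S d
    refine .letin (γ₂ := zv S (Γ.map (tyTransV S)).length) ih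
      (.ret (.inr (var0 S _ _)) (vle_of_eq S ?_)) (vle_of_eq S ?_)
    · rw [vscale_one, S.mul_one]
    · rw [vscale_one, vadd_zv _ _ _ (by simp [l])]
  | @case γ γ₁ γ₂ Γ q e e₁ e₂ τ₁ τ₂ τ d d₁ d₂ hq h ih ih₁ ih₂ =>
    have l₂ := slen S d₂
    refine .letin (γ₂ := γ₂) ih ?_ h
    refine .case (γ₂ := S.zero :: γ₂) (var0 S _ _) (cren S 1 _ ih₁) (cren S 1 _ ih₂) hq
      (vle_of_eq S ?_)
    simp only [vscale_cons, vscale_zv, vadd_cons, S.mul_one, S.one_mul, S.add_zero]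
    rw [zv_vadd _ _ _ (by simpa using l₂)]
  | @box γ γ₁ Γ q e τ d h ih =>
    have l := slen S d
    refine .ret (.thunk (.letin (γ₂ := zv S (Γ.map (tyTransV S)).length) ih
      (.ret (var0 S _ _) (vle_of_eq S ?_)) ?_)) (vle_of_eq S (vscale_one S _))
    · simp only [vscale_cons, vscale_zv, S.mul_one, S.one_mul]
    · rw [vadd_zv _ _ _ (by simp [vscale, l])]; exact h
  | @unbox γ γ₁ γ₂ Γ q₁ q₂ e₁ e₂ τ τ' d₁ d₂ h ih₁ ih₂ =>
    have l₂ := slen S d₂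
    refine .letin (γ₂ := γ₂) ih₁ ?_ h
    refine .letin (γ₂ := S.zero :: γ₂) (.force (var0 S _ _)) (cren S 1 _ ih₂) (vle_of_eq S ?_)
    simp only [vscale_cons, vscale_zv, vadd_cons, S.mul_one, S.one_mul, S.add_zero]
    rw [zv_vadd _ _ _ (by simpa using l₂)]
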